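/- Let w be a compatible weight system on cubes of [0,∞)^s induced from w_0 as w(□) = max of w_0 over vertices. Suppose R₂ ⊆ R₁ are lattice rectangles and there is a sequence of one-step coordinate contractions from R₁ to R₂ along which w_0 is non-increasing in the sense of Lemma 4.2 (for each deleted slice in direction j, w_0(l) ≥ w_0(l - E_j) for all deleted lattice points l). Then for every N the inclusion S_N(R₂) ⊆ S_N(R₁) is a homotopy equivalence (indeed a deformation retract), hence H^*(R₁, w) ≅ H^*(R₂, w). -/

import Mathlib

open Classical

noncomputable section

/-- A cube of the lattice `ℤ^s`. -/
structure Cub (s : ℕ) where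
  base : Fin s → ℤ
  dirs : Finset (Fin s)

/-- The weight of a cube: the maximum of `w0` over its vertices. -/
def wt {s : ℕ} (w0 : (Fin s → ℤ) → ℤ) (c : Cub s) : ℤ :=
  c.dirs.powerset.sup' ⟨∅, Finset.empty_mem_powerset _⟩
    (fun K => w0 (c.base + ∑ j ∈ K, Pi.single j 1))

/-- The topological realization of a cube inside `ℝ^s`. -/
def cubeSet {s : ℕ} (c : Cub s) : Set (Fin s → ℝ) :=
  {x | ∀ i, (c.base i : ℝ) ≤ x i ∧
        x i ≤ (c.base i : ℝ) + (if i ∈ c.dirs then 1 else 0)}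

/-- The cube lies in the rectangle `R(0,T)`. -/
def inRect {s : ℕ} (T : Fin s → ℕ) (c : Cub s) : Prop :=
  ∀ i, 0 ≤ c.base i ∧ c.base i + (if i ∈ c.dirs then 1 else 0) ≤ (T i : ℤ)

/-- `S_N(R)`: the union of all cubes of the rectangle `R = R(0,T)` of weight `≤ N`. -/
def SN {s : ℕ} (w0 : (Fin s → ℤ) → ℤ) (T : Fin s → ℕ) (N : ℤ) : Set (Fin s → ℝ) :=
  ⋃ c ∈ {c : Cub s | inRect T c ∧ wt w0 c ≤ N}, cubeSet c

/-!
Pushing `x` down along the `j`-th axis to `min (x j) (T j - 1)` retracts the rectangle `R(0, T)`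
onto the one without its top slice `x j = T j`. This motion stays inside `S_N`: a point strictly
above the level `T j - 1` lies in a cube of weight `≤ N` that is either already a prism over that
level or contained in the top slice, and in the latter case the prism swept out by moving the cube
down by `E_j` has no larger weight, since the vertices it gains satisfy `w₀ (l - E_j) ≤ w₀ l ≤ N`.
So each contraction step is a strong deformation retraction, and these compose.
-/

section DeformationRetract

open ContinuousMap

/-- `A` is a strong deformation retract of `B`: there is a retraction of `B` onto `A` which, as a
self-map of `B`, is homotopic to the identity relative to `A`. It is the relative
homotopy that makes the map `r` into a retraction, i.e. fix `A` pointwise. -/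
def IsStrongDeformationRetract {X : Type*} [TopologicalSpace X] (A B : Set X) : Prop :=
  ∃ (hAB : A ⊆ B) (r : C(B, A)),
    HomotopicRel ((inclusion hAB).comp r) (.id B) (Subtype.val ⁻¹' A)

lemma homotopicRel_comp_right {X Y Z : Type*} [TopologicalSpace X] [TopologicalSpace Y]
    [TopologicalSpace Z] {g₀ g₁ : C(Y, Z)} {S : Set X} {S' : Set Y} {f : C(X, Y)}
    (hg : HomotopicRel g₀ g₁ S') (hf : Set.MapsTo f S S') :
    HomotopicRel (g₀.comp f) (g₁.comp f) S :=
  hg.map fun G => ⟨G.toHomotopy.compContinuousMap f, fun t _ hx => G.eq_fst t (hf hx)⟩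

namespace IsStrongDeformationRetract

section TopologicalSpace

variable {X : Type*} [TopologicalSpace X] {A B C : Set X}

lemma refl (A : Set X) : IsStrongDeformationRetract A A :=
  ⟨subset_rfl, .id A, .refl _⟩

lemma trans (hAB : IsStrongDeformationRetract A B) (hBC : IsStrongDeformationRetract B C) :
    IsStrongDeformationRetract A C := by
  obtain ⟨iAB, r, hr⟩ := hAB
  obtain ⟨iBC, q, hq⟩ := hBC
  have q_mapsTo : Set.MapsTo q (Subtype.val ⁻¹' A) (Subtype.val ⁻¹' A) := fun x hx => by
    have hqx : (q x : X) = x := congr_arg Subtype.val (hq.fst_eq_snd (iAB hx))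
    rwa [Set.mem_preimage, hqx]
  have hrq : HomotopicRel ((inclusion iBC).comp (((inclusion iAB).comp r).comp q))
      ((inclusion iBC).comp ((ContinuousMap.id B).comp q)) (Subtype.val ⁻¹' A) :=
    (homotopicRel_comp_right hr q_mapsTo).comp_continuousMap _
  have hq' : HomotopicRel ((inclusion iBC).comp q) (.id C) (Subtype.val ⁻¹' A) :=
    hq.map fun H => ⟨H.toHomotopy, fun t _ hx => H.prop t _ (iAB hx)⟩
  exact ⟨iAB.trans iBC, r.comp q, hrq.trans hq'⟩

lemma exists_homotopyEquiv (h : IsStrongDeformationRetract A B) :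
    ∃ (hAB : A ⊆ B) (e : HomotopyEquiv A B), ⇑e.toFun = Set.inclusion hAB := by
  obtain ⟨hAB, r, hr⟩ := h
  have leftInv : r.comp (inclusion hAB) = .id A := by
    ext x
    exact congr_arg ((↑) : B → X) (hr.fst_eq_snd (x := Set.inclusion hAB x) x.2)
  exact ⟨hAB, ⟨inclusion hAB, r, leftInv ▸ .refl _, hr.homotopic⟩, rfl⟩

end TopologicalSpace

lemma of_segment_subset {E : Type*} [AddCommGroup E] [TopologicalSpace E]
    [IsTopologicalAddGroup E] [Module ℝ E] [ContinuousSMul ℝ E] {A B : Set E} {r : E → E}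
    (hAB : A ⊆ B) (r_cont : ContinuousOn r B) (r_mapsTo : Set.MapsTo r B A)
    (r_fix : Set.EqOn r id A) (r_segment : ∀ x ∈ B, segment ℝ (r x) x ⊆ B) :
    IsStrongDeformationRetract A B := by
  let r' : C(B, A) := ⟨r_mapsTo.restrict, r_cont.mapsToRestrict r_mapsTo⟩
  let rE : C(B, E) := ⟨fun x => r x, r_cont.domRestrict⟩
  let H : Homotopy rE ⟨(↑), continuous_subtype_val⟩ := .affine _ _
  have H_mem (p : unitInterval × B) : H p ∈ B :=
    r_segment p.2 p.2.2 (lineMap_mem_segment ℝ _ _ p.1.2)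
  refine ⟨hAB, r', ⟨⟨⟨⟨fun p => ⟨H p, H_mem p⟩, H.continuous.subtype_mk _⟩, fun x => ?_,
    fun x => ?_⟩, fun t x hx => ?_⟩⟩⟩
  · exact Subtype.ext (H.apply_zero x)
  · exact Subtype.ext (H.apply_one x)
  · have hrx : r x = x := r_fix hx
    refine Subtype.ext ?_
    change AffineMap.lineMap (r x) (x : E) (t : ℝ) = r x
    rw [hrx, AffineMap.lineMap_same_apply]

lemma inter_setOf_apply_le {ι : Type*} [DecidableEq ι] {B : Set (ι → ℝ)} {j : ι} {a : ℝ}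
    (hB : ∀ x ∈ B, ∀ y ∈ Set.Icc a (x j), Function.update x j y ∈ B) :
    IsStrongDeformationRetract (B ∩ {x | x j ≤ a}) B := by
  let r (x : ι → ℝ) : ι → ℝ := Function.update x j (min (x j) a)
  have r_of_le {x : ι → ℝ} (hx : x j ≤ a) : r x = x := by
    simp only [r, min_eq_left hx, Function.update_eq_self]
  have r_segment (x) (hx : x ∈ B) : segment ℝ (r x) x ⊆ B := by
    rcases le_total (x j) a with hxa | hax
    · rwa [r_of_le hxa, segment_same, Set.singleton_subset_iff]
    · calc segment ℝ (r x) x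
          = Function.update x j '' segment ℝ a (x j) := by
            rw [Pi.image_update_segment, Function.update_eq_self]
            simp only [r, min_eq_right hax]
        _ = Function.update x j '' Set.Icc a (x j) := by rw [segment_eq_Icc hax]
        _ ⊆ B := Set.image_subset_iff.2 (hB x hx)
  refine of_segment_subset Set.inter_subset_left ?_ (fun x hx => ⟨?_, ?_⟩)
    (fun x hx => r_of_le hx.2) r_segment
  · exact (continuous_id.update j ((continuous_apply j).min continuous_const)).continuousOn
  · exact r_segment x hx (left_mem_segment ℝ _ _)
  · simp [r]

end IsStrongDeformationRetract

end DeformationRetract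

section Cubes

variable {s : ℕ} {w0 : (Fin s → ℤ) → ℤ} {T T' : Fin s → ℕ} {N : ℤ} {c : Cub s} {j : Fin s}
  {x : Fin s → ℝ}

namespace Cub

/-- The vertex of a cube reached from its base along the directions in `K`; the actual vertices
are those with `K ⊆ c.dirs`, which is not enforced. -/
def vertex (c : Cub s) (K : Finset (Fin s)) : Fin s → ℤ :=
  c.base + ∑ j ∈ K, Pi.single j 1

/-- The prism swept out by a cube when it moves by `-E_j`. It contains the cube only if
`j ∉ c.dirs`; otherwise it is the translate of the cube. -/
def downPrism (c : Cub s) (j : Fin s) : Cub s where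
  base := c.base - Pi.single j 1
  dirs := insert j c.dirs

lemma vertex_apply (c : Cub s) (K : Finset (Fin s)) (i : Fin s) :
    c.vertex K i = c.base i + if i ∈ K then 1 else 0 := by
  simp [vertex, Finset.sum_apply, Pi.single_apply]

lemma vertex_downPrism_of_mem {K : Finset (Fin s)} (hj : j ∈ K) :
    (c.downPrism j).vertex K = c.vertex (K.erase j) := by
  simp only [vertex, downPrism, ← Finset.add_sum_erase K _ hj]
  abel

lemma vertex_downPrism (c : Cub s) (j : Fin s) (K : Finset (Fin s)) :
    (c.downPrism j).vertex K = c.vertex K - Pi.single j 1 :=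
  sub_add_eq_add_sub _ _ _

end Cub

lemma wt_le_iff : wt w0 c ≤ N ↔ ∀ K ⊆ c.dirs, w0 (c.vertex K) ≤ N :=
  (Finset.sup'_le_iff _ _).trans (by simp only [Finset.mem_powerset, Cub.vertex])

lemma wt_le_wt_of_dirs_subset {b : Fin s → ℤ} {D D' : Finset (Fin s)} (h : D ⊆ D') :
    wt w0 ⟨b, D⟩ ≤ wt w0 ⟨b, D'⟩ :=
  Finset.sup'_mono _ (Finset.powerset_mono.2 h) _

lemma wt_downPrism_le
    (hw : ∀ K ⊆ c.dirs, j ∉ K → w0 (c.vertex K - Pi.single j 1) ≤ w0 (c.vertex K)) :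
    wt w0 (c.downPrism j) ≤ wt w0 c := by
  have le_wt : ∀ K ⊆ c.dirs, w0 (c.vertex K) ≤ wt w0 c := wt_le_iff.1 le_rfl
  refine wt_le_iff.2 fun K (hK : K ⊆ insert j c.dirs) => ?_
  by_cases hj : j ∈ K
  · rw [Cub.vertex_downPrism_of_mem hj]
    exact le_wt _ (Finset.subset_insert_iff.1 hK)
  · have hK' : K ⊆ c.dirs := (Finset.subset_insert_iff_of_notMem hj).1 hK
    rw [Cub.vertex_downPrism]
    exact (hw K hK' hj).trans (le_wt K hK')

lemma inRect.vertex_mem (hc : inRect T c) {K : Finset (Fin s)} (hK : K ⊆ c.dirs) (i : Fin s) :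
    0 ≤ c.vertex K i ∧ c.vertex K i ≤ T i := by
  have hi := hc i
  have hKi : i ∈ K → i ∈ c.dirs := @hK i
  rw [Cub.vertex_apply]
  grind

lemma inRect.downPrism (hc : inRect T c) (hj : 0 < c.base j) : inRect T (c.downPrism j) := by
  intro i
  have hi := hc i
  rcases eq_or_ne i j with rfl | hij
  · simp only [Cub.downPrism, Pi.sub_apply, Pi.single_eq_same, Finset.mem_insert_self, if_true]
    grind
  · simpa [Cub.downPrism, hij] using hi

lemma cubeSet_subset_cubeSet_downPrism (hj : j ∉ c.dirs) :
    cubeSet c ⊆ cubeSet (c.downPrism j) := by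
  intro x hx i
  have hi := hx i
  rcases eq_or_ne i j with rfl | hij
  · simp only [hj, if_false, add_zero] at hi
    simp only [Cub.downPrism, Pi.sub_apply, Pi.single_eq_same, Finset.mem_insert_self, if_true]
    push_cast
    exact ⟨by linarith, by linarith⟩
  · simpa [Cub.downPrism, hij] using hi

lemma update_mem_cubeSet (hx : x ∈ cubeSet c) (hj : j ∈ c.dirs) {y : ℝ}
    (hy : y ∈ Set.Icc (c.base j : ℝ) (c.base j + 1)) : Function.update x j y ∈ cubeSet c := by
  intro i
  rcases eq_or_ne i j with rfl | hij
  · simpa [hj] using hy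
  · simpa [hij] using hx i

lemma mem_SN : x ∈ SN w0 T N ↔ ∃ c, inRect T c ∧ wt w0 c ≤ N ∧ x ∈ cubeSet c := by
  simp only [SN, Set.mem_iUnion, Set.mem_ofPred_eq, exists_prop, and_assoc]

lemma SN_mono (h : T' ≤ T) : SN w0 T' N ⊆ SN w0 T N := by
  intro x hx
  obtain ⟨c, hc, hcN, hxc⟩ := mem_SN.1 hx
  exact mem_SN.2 ⟨c, fun i => ⟨(hc i).1, (hc i).2.trans (by exact_mod_cast h i)⟩, hcN, hxc⟩

lemma apply_le_of_mem_SN (hx : x ∈ SN w0 T N) (i : Fin s) : x i ≤ T i := by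
  obtain ⟨c, hc, -, hxc⟩ := mem_SN.1 hx
  calc x i ≤ c.base i + if i ∈ c.dirs then 1 else 0 := (hxc i).2
    _ ≤ T i := by exact_mod_cast (hc i).2

lemma SN_eq_inter_setOf_le (h : T' ≤ T) :
    SN w0 T' N = SN w0 T N ∩ {x | ∀ i, x i ≤ T' i} := by
  refine Set.Subset.antisymm (fun x hx => ⟨SN_mono h hx, apply_le_of_mem_SN hx⟩) ?_
  rintro x ⟨hx, hxT'⟩
  obtain ⟨c, hc, hcN, hxc⟩ := mem_SN.1 hx
  -- The directions in which `c` sticks out of `R(0, T')` are those in which `x` lies on the lower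
  -- face of `c`, so `x` lies in the face of `c` spanned by the other directions.
  let D := c.dirs.filter fun i => c.base i < T' i
  have base_le (i) : c.base i ≤ T' i := by exact_mod_cast (hxc i).1.trans (hxT' i)
  refine mem_SN.2 ⟨⟨c.base, D⟩, fun i => ⟨(hc i).1, ?_⟩,
    (wt_le_wt_of_dirs_subset (Finset.filter_subset _ _)).trans hcN, fun i => ⟨(hxc i).1, ?_⟩⟩
  · have := base_le i
    simp only [D, Finset.mem_filter]
    grind
  · rcases (base_le i).lt_or_eq with hlt | heq
    · simpa [D, hlt] using (hxc i).2
    · have : (c.base i : ℝ) = T' i := by exact_mod_cast heq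
      simpa [D, heq, this] using hxT' i

end Cubes

section Contraction

/-- The rectangle `R(0, T')` arises from `R(0, T)` by a one-step contraction in direction `j`, which
deletes the slice `l j = T j`, and `w0` is non-increasing along this contraction. -/
structure IsOneStepContraction {s : ℕ} (w0 : (Fin s → ℤ) → ℤ) (j : Fin s) (T T' : Fin s → ℕ) :
    Prop where
  apply_eq : T j = T' j + 1
  apply_of_ne : ∀ t, t ≠ j → T t = T' t
  weight_le : ∀ l : Fin s → ℤ, (∀ t, 0 ≤ l t ∧ l t ≤ (T t : ℤ)) → l j = (T j : ℤ) →
    w0 (l - Pi.single j 1) ≤ w0 l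

namespace IsOneStepContraction

variable {s : ℕ} {w0 : (Fin s → ℤ) → ℤ} {T T' : Fin s → ℕ} {N : ℤ} {j : Fin s} {x : Fin s → ℝ}

lemma le (h : IsOneStepContraction w0 j T T') : T' ≤ T := by
  intro i
  rcases eq_or_ne i j with rfl | hij
  · exact (Nat.le_succ _).trans h.apply_eq.ge
  · exact (h.apply_of_ne i hij).ge

lemma SN_eq_inter_setOf_apply_le (h : IsOneStepContraction w0 j T T') :
    SN w0 T' N = SN w0 T N ∩ {x | x j ≤ T' j} := by
  rw [SN_eq_inter_setOf_le h.le]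
  refine Set.Subset.antisymm (fun x hx => ⟨hx.1, hx.2 j⟩) fun x hx => ⟨hx.1, fun i => ?_⟩
  rcases eq_or_ne i j with rfl | hij
  · exact hx.2
  · exact h.apply_of_ne i hij ▸ apply_le_of_mem_SN hx.1 i

lemma wt_downPrism_le (h : IsOneStepContraction w0 j T T') {c : Cub s} (hc : inRect T c)
    (hcj : c.base j = T j) : wt w0 (c.downPrism j) ≤ wt w0 c :=
  _root_.wt_downPrism_le fun K hK hjK =>
    h.weight_le _ (hc.vertex_mem hK) (by simp [Cub.vertex_apply, hjK, hcj])

lemma exists_prism (h : IsOneStepContraction w0 j T T') (hx : x ∈ SN w0 T N)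
    (hxj : T' j < x j) :
    ∃ c, inRect T c ∧ wt w0 c ≤ N ∧ x ∈ cubeSet c ∧ j ∈ c.dirs ∧ c.base j = T' j := by
  obtain ⟨c, hc, hcN, hxc⟩ := mem_SN.1 hx
  have hTj := h.apply_eq
  have c_top : (T' j : ℤ) < c.base j + if j ∈ c.dirs then 1 else 0 := by
    exact_mod_cast hxj.trans_le (hxc j).2
  have c_le := (hc j).2
  by_cases hj : j ∈ c.dirs
  · simp only [hj, if_true] at c_top c_le
    exact ⟨c, hc, hcN, hxc, hj, by lia⟩
  · simp only [hj, if_false] at c_top c_le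
    have hcj : c.base j = T j := by lia
    refine ⟨c.downPrism j, hc.downPrism (by lia), (h.wt_downPrism_le hc hcj).trans hcN,
      cubeSet_subset_cubeSet_downPrism hj hxc, Finset.mem_insert_self _ _, ?_⟩
    simp [Cub.downPrism, hcj, hTj]

lemma update_mem_SN (h : IsOneStepContraction w0 j T T') (hx : x ∈ SN w0 T N) {y : ℝ}
    (hy : y ∈ Set.Icc (T' j : ℝ) (x j)) : Function.update x j y ∈ SN w0 T N := by
  rcases (hy.1.trans hy.2).eq_or_lt with heq | hlt
  · rwa [show y = x j from le_antisymm hy.2 (heq ▸ hy.1), Function.update_eq_self]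
  · obtain ⟨c, hc, hcN, hxc, hj, hcj⟩ := h.exists_prism hx hlt
    have x_le : x j ≤ c.base j + 1 := by simpa [hj] using (hxc j).2
    have hy' : y ∈ Set.Icc (c.base j : ℝ) (c.base j + 1) :=
      ⟨by simpa [hcj] using hy.1, hy.2.trans x_le⟩
    exact mem_SN.2 ⟨c, hc, hcN, update_mem_cubeSet hxc hj hy'⟩

lemma isStrongDeformationRetract_SN (h : IsOneStepContraction w0 j T T') (N : ℤ) :
    IsStrongDeformationRetract (SN w0 T' N) (SN w0 T N) := by
  rw [h.SN_eq_inter_setOf_apply_le]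
  exact .inter_setOf_apply_le fun _ hx _ hy => h.update_mem_SN hx hy

end IsOneStepContraction

end Contraction

theorem stmt10_general {s : ℕ} {w0 : (Fin s → ℤ) → ℤ} {m : ℕ} {Ts : ℕ → (Fin s → ℕ)}
    (hstep : ∀ k < m, ∃ j, IsOneStepContraction w0 j (Ts k) (Ts (k + 1))) (N : ℤ) :
    IsStrongDeformationRetract (SN w0 (Ts m) N) (SN w0 (Ts 0) N) := by
  induction m with
  | zero => exact .refl _
  | succ m ih =>
    obtain ⟨j, hj⟩ := hstep m m.lt_succ_self
    have hstep' : ∀ k < m, ∃ j, IsOneStepContraction w0 j (Ts k) (Ts (k + 1)) :=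
      fun k hk => hstep k (hk.trans m.lt_succ_self)
    exact (hj.isStrongDeformationRetract_SN N).trans (ih hstep')

/-- if `R₂ ⊆ R₁` are rectangles connected by one-step coordinate
contractions along which `w0` is non-increasing, then for every `N` the inclusion
`S_N(R₂) ⊆ S_N(R₁)` is a homotopy equivalence. -/
theorem stmt10 (s : ℕ) (w0 : (Fin s → ℤ) → ℤ)
    (T₁ T₂ : Fin s → ℕ) (hTle : ∀ i, T₂ i ≤ T₁ i)
    (m : ℕ) (Ts : ℕ → (Fin s → ℕ))
    (h0 : Ts 0 = T₁) (hm : Ts m = T₂)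
    (hstep : ∀ k < m, ∃ j : Fin s,
      (Ts k) j = (Ts (k + 1)) j + 1 ∧
      (∀ t, t ≠ j → Ts k t = Ts (k + 1) t) ∧
      (∀ l : Fin s → ℤ, (∀ t, 0 ≤ l t ∧ l t ≤ ((Ts k) t : ℤ)) →
        l j = ((Ts k) j : ℤ) → w0 (l - Pi.single j 1) ≤ w0 l)) :
    ∀ N : ℤ, ∃ hsub : SN w0 T₂ N ⊆ SN w0 T₁ N,
      ∃ e : ContinuousMap.HomotopyEquiv (SN w0 T₂ N) (SN w0 T₁ N),
        ⇑e.toFun = Set.inclusion hsub := by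
  subst h0 hm
  exact fun N => (stmt10_general (fun k hk => (hstep k hk).imp fun _ ⟨hj, hne, hw⟩ =>
    ⟨hj, hne, hw⟩) N).exists_homotopyEquiv
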